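/- The Ellis enveloping semigroup E(Ω,φ) (with the topology of pointwise convergence) is metrizable if and only if the operator semigroup G(Ω,φ) (with the weak* operator topology) is metrizable. -/

import Mathlib

open MeasureTheory Filter Topology

/-- The pairing `⟨f, μ⟩ = ∫ f dμ` of a function with a finite signed Borel measure,
defined via the Jordan decomposition of the signed measure. -/
noncomputable def spair {Ω : Type*} [MeasurableSpace Ω] (f : Ω → ℝ) (μ : SignedMeasure Ω) : ℝ :=
  (∫ ω, f ω ∂μ.toJordanDecomposition.posPart) - (∫ ω, f ω ∂μ.toJordanDecomposition.negPart)

/-- The weak* topology on the space `X*` of finite signed Borel measures, i.e. the topology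
of convergence of the pairings with all continuous functions `x ∈ C(Ω, ℝ)`. With this topology
on the codomain, the product topology on `SignedMeasure Ω → SignedMeasure Ω` is precisely the
weak* operator topology (pointwise convergence with `X*` in its weak* topology). -/
noncomputable instance weakStarTopology {Ω : Type*} [TopologicalSpace Ω] [MeasurableSpace Ω] :
    TopologicalSpace (SignedMeasure Ω) :=
  TopologicalSpace.induced (fun μ => fun x : C(Ω, ℝ) => spair (⇑x) μ) inferInstance

/-- The operator `V : X* → X*`, pushforward by `φ`: `(Vμ)(e) = μ(φ⁻¹ e)`. -/
noncomputable def Vop {Ω : Type*} [MeasurableSpace Ω] (φ : Ω → Ω) :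
    SignedMeasure Ω → SignedMeasure Ω :=
  fun μ => μ.map φ

/-- The Dirac measure at `ω`, as a signed measure. -/
noncomputable def diracSM {Ω : Type*} [MeasurableSpace Ω] (ω : Ω) : SignedMeasure Ω :=
  (Measure.dirac ω).toSignedMeasure

/-- `Γ(Ω,φ)`: the closure of `{Vⁿ : n ≥ 0}` in the weak* operator topology. -/
def GammaSG {Ω : Type*} [TopologicalSpace Ω] [MeasurableSpace Ω] (φ : Ω → Ω) :
    Set (SignedMeasure Ω → SignedMeasure Ω) :=
  closure (Set.range fun n : ℕ => (Vop φ)^[n])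

/-- `G(Ω,φ)`: the closure of the convex hull of `{Vⁿ : n ≥ 0}` in the weak* operator topology. -/
def GSG {Ω : Type*} [TopologicalSpace Ω] [MeasurableSpace Ω] (φ : Ω → Ω) :
    Set (SignedMeasure Ω → SignedMeasure Ω) :=
  closure (convexHull ℝ (Set.range fun n : ℕ => (Vop φ)^[n]))

/-- The kernel `L = {Q ∈ G(Ω,φ) : V ∘ Q = Q}` of the semigroup `G(Ω,φ)`. -/
def Lker {Ω : Type*} [TopologicalSpace Ω] [MeasurableSpace Ω] (φ : Ω → Ω) :
    Set (SignedMeasure Ω → SignedMeasure Ω) :=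
  {Q ∈ GSG φ | Vop φ ∘ Q = Q}

/-- The Ellis enveloping semigroup `E(Ω,φ)`: the closure of the iterates `{φⁿ : n ≥ 0}`
in the product topology (pointwise convergence) on `Ω → Ω`. -/
def EllisE {Ω : Type*} [TopologicalSpace Ω] (φ : Ω → Ω) : Set (Ω → Ω) :=
  closure (Set.range fun n : ℕ => φ^[n])

/-- `E_b(Ω,φ)`: the smallest set of self-maps of `Ω` containing the iterates `{φⁿ : n ≥ 0}`
and sequentially closed under pointwise convergence. -/
inductive Eb {Ω : Type*} [TopologicalSpace Ω] (φ : Ω → Ω) : (Ω → Ω) → Prop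
  | iterate (n : ℕ) : Eb φ φ^[n]
  | lim (p : ℕ → Ω → Ω) (q : Ω → Ω) (hp : ∀ k, Eb φ (p k))
      (hq : ∀ ω, Tendsto (fun k => p k ω) atTop (𝓝 (q ω))) : Eb φ q

/-- `E₁(Ω,φ)`: the set of pointwise limits of sequences of iterates `φ^{n_k}`. -/
def E1SG {Ω : Type*} [TopologicalSpace Ω] (φ : Ω → Ω) : Set (Ω → Ω) :=
  {p | ∃ n : ℕ → ℕ, ∀ ω, Tendsto (fun k => φ^[n k] ω) atTop (𝓝 (p ω))}

/-- An operator `P ∈ Γ(Ω,φ)` with `p = πP` is regular if `p` is Borel measurable and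
`(Pμ)(e) = μ(p⁻¹ e)` for every Borel probability measure `μ` and Borel set `e`. -/
def RegularOperator {Ω : Type*} [TopologicalSpace Ω] [MeasurableSpace Ω]
    (P : SignedMeasure Ω → SignedMeasure Ω) (p : Ω → Ω) : Prop :=
  Measurable p ∧ ∀ (μ : Measure Ω) [IsProbabilityMeasure μ],
    ∀ e : Set Ω, MeasurableSet e → P μ.toSignedMeasure e = (μ (p ⁻¹' e)).toReal

/-- A minimal set of the semicascade `(Ω,φ)`: a nonempty closed `φ`-invariant set containing
no proper nonempty closed `φ`-invariant subset. -/
def IsMinimalSet {Ω : Type*} [TopologicalSpace Ω] (φ : Ω → Ω) (m : Set Ω) : Prop :=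
  m.Nonempty ∧ IsClosed m ∧ Set.MapsTo φ m m ∧
    ∀ m' ⊆ m, m'.Nonempty → IsClosed m' → Set.MapsTo φ m' m' → m' = m

/-- The orbit closure of a point `ω`: the closure of the trajectory `{φⁿ ω : n ≥ 0}`. -/
def orbitClosure {Ω : Type*} [TopologicalSpace Ω] (φ : Ω → Ω) (ω : Ω) : Set Ω :=
  closure (Set.range fun n : ℕ => φ^[n] ω)

/-- A `φ`-ergodic measure: a `φ`-invariant Borel probability measure `μ` such that
`μ(e) ∈ {0,1}` for every Borel set `e` with `φ⁻¹ e = e`. -/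
def IsErgodicMeasure {Ω : Type*} [MeasurableSpace Ω] (φ : Ω → Ω) (μ : Measure Ω) : Prop :=
  IsProbabilityMeasure μ ∧ (∀ e : Set Ω, MeasurableSet e → μ (φ ⁻¹' e) = μ e) ∧
    (∀ e : Set Ω, MeasurableSet e → φ ⁻¹' e = e → μ e = 0 ∨ μ e = 1)

/-- The support of a Borel measure: the smallest closed set of full measure
(the intersection of all closed sets of full measure). -/
def msupp {Ω : Type*} [TopologicalSpace Ω] [MeasurableSpace Ω] (μ : Measure Ω) : Set Ω :=
  ⋂₀ {s : Set Ω | IsClosed s ∧ μ sᶜ = 0}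

/-- The semicascade `(Ω,φ)` is tame: for every continuous `x` and every strictly increasing
sequence `n(1) < n(2) < ⋯`, the infimum over finitely supported real coefficients `a` with
`Σ|aₖ| = 1` of the sup-norms `‖Σₖ aₖ · (x ∘ φ^{n(k)})‖` is `0`. -/
def Tame {Ω : Type*} [TopologicalSpace Ω] [CompactSpace Ω] (φ : Ω → Ω)
    (hφ : Continuous φ) : Prop :=
  ∀ (x : C(Ω, ℝ)) (n : ℕ → ℕ), StrictMono n →
    sInf {r : ℝ | ∃ a : ℕ →₀ ℝ, (∑ k ∈ a.support, |a k|) = 1 ∧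
      r = ‖∑ k ∈ a.support, a k • x.comp ⟨φ^[n k], hφ.iterate (n k)⟩‖} = 0

/-- Points `a, b` are proximal: `inf_{n ≥ 0} d(φⁿ a, φⁿ b) = 0`. -/
def Proximal {Ω : Type*} [PseudoMetricSpace Ω] (φ : Ω → Ω) (a b : Ω) : Prop :=
  (⨅ n : ℕ, dist (φ^[n] a) (φ^[n] b)) = 0

variable {Ω : Type*} [TopologicalSpace Ω] [CompactSpace Ω] [TopologicalSpace.MetrizableSpace Ω]
  [Nonempty Ω] [MeasurableSpace Ω] [BorelSpace Ω]

set_option linter.unusedSectionVars false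
set_option linter.style.haveILetI false

theorem ind_cont {S ι : Type*} (g : S → ι → ℝ) (i : ι) :
    @Continuous S ℝ (TopologicalSpace.induced g inferInstance) _ (fun s => g s i) :=
  @Continuous.comp _ _ _ (TopologicalSpace.induced g inferInstance) _ _ _ _
    (continuous_apply i) continuous_induced_dom

/-- Abstract metrizability criterion. -/
theorem metrizable_aux {S ι K : Type*} [TopologicalSpace S] [TopologicalSpace K] [CompactSpace K]
    [TopologicalSpace.MetrizableSpace K] (e : ι → S → ℝ)
    (he : IsEmbedding (fun s => fun i => e i s)) (F : ι → C(K, ℝ))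
    (h : ∀ i j s, |e i s - e j s| ≤ ‖F i - F j‖) : TopologicalSpace.MetrizableSpace S := by
  letI : MetricSpace K := TopologicalSpace.metrizableSpaceMetric K
  have hsep : TopologicalSpace.IsSeparable (Set.range F) := TopologicalSpace.IsSeparable.of_separableSpace _
  obtain ⟨t, ht, htc, htd⟩ := hsep.exists_countable_dense_subset
  choose g hg using fun y : t => ht y.2
  have : Countable t := htc
  have hcl : ∀ i, ∀ ε > 0, ∃ y : t, ‖F i - F (g y)‖ < ε := by
    intro i ε hε
    obtain ⟨y, hy, hyd⟩ := Metric.mem_closure_iff.1 (htd ⟨i, rfl⟩) ε hε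
    refine ⟨⟨y, hy⟩, ?_⟩
    rw [hg, ← dist_eq_norm]
    exact hyd
  have hemb : IsEmbedding (fun s => fun y : t => e (g y) s) := by
    refine ⟨⟨le_antisymm ?_ ?_⟩, ?_⟩
    · rw [← continuous_iff_le_induced]
      refine continuous_pi fun y => ?_
      exact (continuous_apply (g y)).comp he.continuous
    · rw [he.eq_induced, ← continuous_iff_le_induced]
      refine @continuous_pi _ _ _ (_) _ _ fun i => ?_
      refine @continuous_of_uniform_approx_of_continuous _ _ (_) _ _ fun u hu => ?_
      obtain ⟨ε, hε, hu⟩ := Metric.mem_uniformity_dist.1 hu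
      obtain ⟨y, hy⟩ := hcl i ε hε
      refine ⟨e (g y), ?_, fun s => hu ?_⟩
      · exact ind_cont (fun s => fun y : t => e (g y) s) y
      · rw [Real.dist_eq]; exact (h _ _ _).trans_lt hy
    · intro s s' hs
      apply he.injective
      funext i
      by_contra hne
      have hpos : 0 < |e i s - e i s'| := abs_pos.2 (sub_ne_zero.2 hne)
      obtain ⟨y, hy⟩ := hcl i (|e i s - e i s'| / 2) (by positivity)
      have h1 := h i (g y) s
      have h2 := h i (g y) s'
      have h3 : e (g y) s = e (g y) s' := congrFun hs y
      have h4 : |e i s - e i s'| ≤ |e i s - e (g y) s| + |e (g y) s - e i s'| := abs_sub_le _ _ _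
      rw [h3, abs_sub_comm (e (g y) s')] at h4
      rw [h3] at h1
      linarith
  exact hemb.metrizableSpace

theorem integrable_cm (μ : Measure Ω) [IsFiniteMeasure μ] (x : C(Ω, ℝ)) : Integrable x μ :=
  x.continuous.integrable_of_hasCompactSupport (HasCompactSupport.of_compactSpace _)

theorem jordan_eq {Ω : Type*} [MeasurableSpace Ω] (μ : SignedMeasure Ω) :
    μ = μ.toJordanDecomposition.posPart.toSignedMeasure
      - μ.toJordanDecomposition.negPart.toSignedMeasure :=
  (SignedMeasure.toSignedMeasure_toJordanDecomposition μ).symm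

/-- The pairing may be computed with any decomposition. -/
theorem spair_sub (f : Ω → ℝ) (hf : Measurable f) (C : ℝ) (hC : ∀ ω, |f ω| ≤ C)
    (a b : Measure Ω) [IsFiniteMeasure a] [IsFiniteMeasure b] :
    spair f (a.toSignedMeasure - b.toSignedMeasure) = (∫ ω, f ω ∂a) - ∫ ω, f ω ∂b := by
  have hint : ∀ (m : Measure Ω) [IsFiniteMeasure m], Integrable f m := fun m _ =>
    Integrable.of_bound hf.aestronglyMeasurable C (Eventually.of_forall hC)
  set ν := a.toSignedMeasure - b.toSignedMeasure with hν
  have h := jordan_eq ν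
  have h2 : (ν.toJordanDecomposition.posPart + b).toSignedMeasure
      = (a + ν.toJordanDecomposition.negPart).toSignedMeasure := by
    rw [Measure.toSignedMeasure_add, Measure.toSignedMeasure_add]
    have h3 := hν.symm.trans h
    rw [sub_eq_sub_iff_add_eq_add] at h3
    rw [h3]
  rw [Measure.toSignedMeasure_eq_toSignedMeasure_iff] at h2
  have h4 := congrArg (fun m => ∫ ω, f ω ∂m) h2
  rw [integral_add_measure (hint _) (hint _), integral_add_measure (hint _) (hint _)] at h4
  unfold spair
  linarith

theorem cm_bd (x : C(Ω, ℝ)) (ω : Ω) : |x ω| ≤ ‖x‖ := x.norm_coe_le_norm ω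

theorem spair_cm_sub (x : C(Ω, ℝ)) (a b : Measure Ω) [IsFiniteMeasure a] [IsFiniteMeasure b] :
    spair x (a.toSignedMeasure - b.toSignedMeasure) = (∫ ω, x ω ∂a) - ∫ ω, x ω ∂b :=
  spair_sub x x.continuous.measurable ‖x‖ (cm_bd x) a b

theorem spair_add (x : C(Ω, ℝ)) (μ ν : SignedMeasure Ω) :
    spair x (μ + ν) = spair x μ + spair x ν := by
  have h : μ + ν = (μ.toJordanDecomposition.posPart + ν.toJordanDecomposition.posPart).toSignedMeasure
      - (μ.toJordanDecomposition.negPart + ν.toJordanDecomposition.negPart).toSignedMeasure := by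
    conv_lhs => rw [jordan_eq μ, jordan_eq ν]
    rw [Measure.toSignedMeasure_add, Measure.toSignedMeasure_add]
    abel
  rw [h, spair_cm_sub, integral_add_measure (integrable_cm _ x) (integrable_cm _ x),
    integral_add_measure (integrable_cm _ x) (integrable_cm _ x)]
  unfold spair
  ring

theorem spair_smul (x : C(Ω, ℝ)) (r : ℝ) (hr : 0 ≤ r) (μ : SignedMeasure Ω) :
    spair x (r • μ) = r * spair x μ := by
  unfold spair
  rw [SignedMeasure.toJordanDecomposition_smul_real,
    JordanDecomposition.real_smul_posPart_nonneg _ _ hr,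
    JordanDecomposition.real_smul_negPart_nonneg _ _ hr,
    integral_smul_nnreal_measure, integral_smul_nnreal_measure]
  simp only [NNReal.smul_def, Real.coe_toNNReal r hr, smul_eq_mul]
  ring

theorem Vop_iterate (φ : Ω → Ω) (hφ : Continuous φ) (n : ℕ) : (Vop φ)^[n] = Vop φ^[n] := by
  induction n with
  | zero => funext μ; simp [Vop]
  | succ n ih =>
    rw [Function.iterate_succ, ih]
    funext μ
    ext s hs
    simp only [Function.comp, Vop]
    rw [VectorMeasure.map_apply _ (hφ.iterate n).measurable hs,
      VectorMeasure.map_apply _ hφ.measurable ((hφ.iterate n).measurable hs),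
      VectorMeasure.map_apply _ (hφ.iterate (n+1)).measurable hs]
    rfl

theorem Vop_sub (ψ : Ω → Ω) (hψ : Measurable ψ) (μ : SignedMeasure Ω) :
    Vop ψ μ = (μ.toJordanDecomposition.posPart.map ψ).toSignedMeasure
      - (μ.toJordanDecomposition.negPart.map ψ).toSignedMeasure := by
  ext s hs
  rw [Vop, VectorMeasure.map_apply _ hψ hs]
  conv_lhs => rw [jordan_eq μ]
  simp only [sub_apply, Measure.toSignedMeasure_apply_measurable hs,
    Measure.toSignedMeasure_apply_measurable (hψ hs), measureReal_def, Measure.map_apply hψ hs]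

theorem spair_Vop (ψ : Ω → Ω) (hψ : Measurable ψ) (x : C(Ω, ℝ)) (μ : SignedMeasure Ω) :
    spair x (Vop ψ μ) = spair (x ∘ ψ) μ := by
  rw [Vop_sub ψ hψ, spair_cm_sub, integral_map hψ.aemeasurable (integrable_cm _ x).1,
    integral_map hψ.aemeasurable (integrable_cm _ x).1]
  rfl

theorem spair_cont (x : C(Ω, ℝ)) : Continuous (fun μ : SignedMeasure Ω => spair x μ) :=
  ind_cont (fun μ : SignedMeasure Ω => fun x : C(Ω, ℝ) => spair (⇑x) μ) x

theorem spair_emb : IsEmbedding (fun μ : SignedMeasure Ω => fun x : C(Ω, ℝ) => spair (⇑x) μ) := by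
  refine ⟨⟨rfl⟩, fun μ ν h => ?_⟩
  have hm : μ.toJordanDecomposition.posPart + ν.toJordanDecomposition.negPart
      = ν.toJordanDecomposition.posPart + μ.toJordanDecomposition.negPart := by
    apply ext_of_forall_integral_eq_of_IsFiniteMeasure
    intro f
    have h1 := congrFun h f.toContinuousMap
    change spair f.toContinuousMap μ = spair f.toContinuousMap ν at h1
    unfold spair at h1
    change ∫ ω, f.toContinuousMap ω ∂_ = ∫ ω, f.toContinuousMap ω ∂_
    rw [integral_add_measure (integrable_cm _ _) (integrable_cm _ _),
      integral_add_measure (integrable_cm _ _) (integrable_cm _ _)]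
    linarith
  rw [jordan_eq μ, jordan_eq ν, sub_eq_sub_iff_add_eq_add, ← Measure.toSignedMeasure_add,
    ← Measure.toSignedMeasure_add, Measure.toSignedMeasure_eq_toSignedMeasure_iff]
  exact hm

theorem sm_t2 : T2Space (SignedMeasure Ω) := spair_emb.t2Space

theorem spair_dirac (x : C(Ω, ℝ)) (ω : Ω) : spair x (diracSM ω) = x ω := by
  have h : diracSM ω = (Measure.dirac ω).toSignedMeasure - (0 : Measure Ω).toSignedMeasure := by
    rw [Measure.toSignedMeasure_zero, sub_zero, diracSM]
  rw [h, spair_cm_sub, integral_dirac]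
  simp

/-- Pointwise evaluation embeds the operator space. -/
theorem op_emb : IsEmbedding (fun (Q : SignedMeasure Ω → SignedMeasure Ω) =>
    fun i : C(Ω, ℝ) × SignedMeasure Ω => spair i.1 (Q i.2)) := by
  refine ⟨⟨le_antisymm ?_ ?_⟩, ?_⟩
  · rw [← continuous_iff_le_induced]
    exact continuous_pi fun i => (spair_cont i.1).comp (continuous_apply i.2)
  · refine continuous_id_iff_le.1 ?_
    refine @continuous_pi _ _ _ (_) _ _ fun μ => ?_
    refine continuous_induced_rng.2 ?_
    refine @continuous_pi _ _ _ (_) _ _ fun x => ?_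
    exact ind_cont (fun (Q : SignedMeasure Ω → SignedMeasure Ω) =>
      fun i : C(Ω, ℝ) × SignedMeasure Ω => spair i.1 (Q i.2)) (x, μ)
  · intro Q Q' h
    funext μ
    apply spair_emb.injective
    funext x
    exact congrFun h (x, μ)

theorem pt_emb : IsEmbedding (fun ω : Ω => fun x : C(Ω, ℝ) => x ω) := by
  refine (Continuous.isClosedEmbedding (continuous_pi fun x => x.continuous) ?_).isEmbedding
  intro a b h
  letI : MetricSpace Ω := TopologicalSpace.metrizableSpaceMetric Ω
  have := congrFun h ⟨fun y => dist a y, by fun_prop⟩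
  simp only [ContinuousMap.coe_mk, dist_self] at this
  exact dist_eq_zero.1 this.symm

theorem map_emb : IsEmbedding (fun (p : Ω → Ω) => fun i : C(Ω, ℝ) × Ω => i.1 (p i.2)) := by
  refine ⟨⟨le_antisymm ?_ ?_⟩, ?_⟩
  · rw [← continuous_iff_le_induced]
    exact continuous_pi fun i => i.1.continuous.comp (continuous_apply i.2)
  · refine continuous_id_iff_le.1 ?_
    refine @continuous_pi _ _ _ (_) _ _ fun ω => ?_
    refine (@IsInducing.continuous_iff _ _ _ _ _ _ (_) _ pt_emb.isInducing).2 ?_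
    refine @continuous_pi _ _ _ (_) _ _ fun x => ?_
    exact ind_cont (fun (p : Ω → Ω) => fun i : C(Ω, ℝ) × Ω => i.1 (p i.2)) (x, ω)
  · intro Q Q' h
    funext μ
    apply pt_emb.injective
    funext x
    exact congrFun h (x, μ)

theorem mass_map_aux (m : FiniteMeasure Ω) (f : Ω → Ω) (hf : Measurable f) :
    (m.map f).mass = m.mass := by
  unfold FiniteMeasure.mass
  rw [FiniteMeasure.map_apply _ hf MeasurableSet.univ, Set.preimage_univ]

theorem gamma_compact (φ : Ω → Ω) (hφ : Continuous φ) : IsCompact (GammaSG φ) := by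
  haveI : T2Space (SignedMeasure Ω) := sm_t2
  let D : FiniteMeasure Ω × FiniteMeasure Ω → SignedMeasure Ω := fun q =>
    (q.1 : Measure Ω).toSignedMeasure - (q.2 : Measure Ω).toSignedMeasure
  have hD : Continuous D := by
    refine continuous_induced_rng.2 (continuous_pi fun x => ?_)
    have : (fun q : FiniteMeasure Ω × FiniteMeasure Ω => spair x (D q)) =
        fun q => (∫ ω, x ω ∂(q.1 : Measure Ω)) - ∫ ω, x ω ∂(q.2 : Measure Ω) := by
      funext q; exact spair_cm_sub x _ _
    change Continuous (fun q : FiniteMeasure Ω × FiniteMeasure Ω => spair x (D q))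
    rw [this]
    exact ((FiniteMeasure.continuous_integral_continuousMap x).comp continuous_fst).sub
      ((FiniteMeasure.continuous_integral_continuousMap x).comp continuous_snd)
  let P : SignedMeasure Ω → FiniteMeasure Ω := fun μ => ⟨μ.toJordanDecomposition.posPart, inferInstance⟩
  let N : SignedMeasure Ω → FiniteMeasure Ω := fun μ => ⟨μ.toJordanDecomposition.negPart, inferInstance⟩
  let K : SignedMeasure Ω → Set (SignedMeasure Ω) := fun μ =>
    D '' ({m | m.mass = (P μ).mass} ×ˢ {m | m.mass = (N μ).mass})
  have hK : ∀ μ, IsCompact (K μ) := fun μ =>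
    ((isCompact_setOfPred_finiteMeasure_eq_of_compactSpace Ω _).prod
      (isCompact_setOfPred_finiteMeasure_eq_of_compactSpace Ω _)).image hD
  have hpi := isCompact_univ_pi hK
  refine hpi.of_isClosed_subset isClosed_closure (closure_minimal ?_ hpi.isClosed)
  rintro _ ⟨n, rfl⟩ μ -
  have hm := (hφ.iterate n).measurable
  refine ⟨((P μ).map φ^[n], (N μ).map φ^[n]), ⟨?_, ?_⟩, ?_⟩
  · exact mass_map_aux _ _ hm
  · exact mass_map_aux _ _ hm
  · simp only
    rw [Vop_iterate φ hφ, Vop_sub _ hm]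
    rfl

theorem ellis_compact (φ : Ω → Ω) : IsCompact (EllisE φ) := isClosed_closure.isCompact

theorem ellis_measurable (φ : Ω → Ω) (hφ : Continuous φ)
    [TopologicalSpace.MetrizableSpace (EllisE φ)] (p : EllisE φ) : Measurable p.1 := by
  let s : Set (EllisE φ) := Set.range fun n : ℕ => ⟨φ^[n], subset_closure ⟨n, rfl⟩⟩
  have hp : p ∈ closure s := by
    rw [closure_subtype, ← Set.range_comp]
    exact p.2
  obtain ⟨u, hu, hlim⟩ := mem_closure_iff_seq_limit.1 hp
  choose n hn using hu
  refine measurable_of_tendsto_metrizable (f := fun k => φ^[n k])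
    (fun k => (hφ.iterate _).measurable) ?_
  have := (continuous_subtype_val.tendsto p).comp hlim
  refine this.congr fun k => ?_
  rw [Function.comp, ← hn]

theorem ellis_pair_cont (φ : Ω → Ω) (hφ : Continuous φ)
    [TopologicalSpace.MetrizableSpace (EllisE φ)] (x : C(Ω, ℝ)) (μ : SignedMeasure Ω) :
    Continuous (fun p : EllisE φ => spair (x ∘ p.1) μ) := by
  have key : ∀ (m : Measure Ω) [IsFiniteMeasure m],
      Continuous (fun p : EllisE φ => ∫ ω, (x ∘ p.1) ω ∂m) := by
    intro m _
    rw [continuous_iff_seqContinuous]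
    intro u p hu
    refine tendsto_integral_of_dominated_convergence (fun _ => ‖x‖) ?_ (integrable_const _) ?_ ?_
    · intro k
      exact (x.continuous.measurable.comp (ellis_measurable φ hφ (u k))).aestronglyMeasurable
    · intro k
      exact Eventually.of_forall fun ω => cm_bd x _
    · refine Eventually.of_forall fun ω => ?_
      have h1 := (continuous_subtype_val.tendsto p).comp hu
      exact (x.continuous.tendsto _).comp ((tendsto_pi_nhds.1 h1) ω)
  exact (key _).sub (key _)

/-- (a1) ⇔ (c1): the Ellis enveloping semigroup `E(Ω,φ)` (topology of pointwise convergence)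
is metrizable iff the operator semigroup `G(Ω,φ)` (weak* operator topology) is metrizable. -/
theorem stmt_7 (φ : Ω → Ω) (hφ : Continuous φ) :
    TopologicalSpace.MetrizableSpace (EllisE φ) ↔
      TopologicalSpace.MetrizableSpace (GSG φ) := by
  constructor
  · intro hE
    haveI : CompactSpace (EllisE φ) := isCompact_iff_compactSpace.1 (ellis_compact φ)
    refine metrizable_aux (S := GSG φ) (ι := C(Ω, ℝ) × SignedMeasure Ω)
      (fun i Q => spair i.1 (Q.1 i.2)) (op_emb.comp IsEmbedding.subtypeVal)
      (fun i => ⟨fun p : EllisE φ => spair (i.1 ∘ p.1) i.2, ellis_pair_cont φ hφ i.1 i.2⟩) ?_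
    intro i j Q
    set c : ℝ := ‖(⟨fun p : EllisE φ => spair (i.1 ∘ p.1) i.2, ellis_pair_cont φ hφ i.1 i.2⟩ : C(EllisE φ, ℝ))
      - ⟨fun p : EllisE φ => spair (j.1 ∘ p.1) j.2, ellis_pair_cont φ hφ j.1 j.2⟩‖ with hc
    let A : Set (SignedMeasure Ω → SignedMeasure Ω) :=
      {R | |spair i.1 (R i.2) - spair j.1 (R j.2)| ≤ c}
    have hA : IsClosed A := isClosed_le (((spair_cont i.1).comp (continuous_apply i.2)).sub
      ((spair_cont j.1).comp (continuous_apply j.2))).abs continuous_const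
    have hAc : Convex ℝ A := by
      intro R hR T hT a b ha hb hab
      change |_| ≤ c at hR
      change |_| ≤ c at hT
      change |_| ≤ c
      simp only [Pi.add_apply, Pi.smul_apply]
      rw [spair_add, spair_add, spair_smul _ _ ha, spair_smul _ _ ha, spair_smul _ _ hb,
        spair_smul _ _ hb]
      rw [abs_le] at *
      obtain rfl : b = 1 - a := by linarith
      constructor <;> nlinarith
    have hsub : (Set.range fun n : ℕ => (Vop φ)^[n]) ⊆ A := by
      rintro _ ⟨n, rfl⟩
      change |_| ≤ c
      simp only
      rw [Vop_iterate φ hφ, spair_Vop _ (hφ.iterate n).measurable,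
        spair_Vop _ (hφ.iterate n).measurable]
      exact ContinuousMap.norm_coe_le_norm
        ((⟨fun p : EllisE φ => spair (i.1 ∘ p.1) i.2, ellis_pair_cont φ hφ i.1 i.2⟩ : C(EllisE φ, ℝ))
      - ⟨fun p : EllisE φ => spair (j.1 ∘ p.1) j.2, ellis_pair_cont φ hφ j.1 j.2⟩)
        ⟨φ^[n], subset_closure ⟨n, rfl⟩⟩
    exact closure_minimal (convexHull_min hsub hAc) hA Q.2
  · intro hG
    have hsubG : GammaSG φ ⊆ GSG φ := closure_mono (subset_convexHull ℝ _)
    haveI : TopologicalSpace.MetrizableSpace (GammaSG φ) :=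
      (IsEmbedding.inclusion hsubG).metrizableSpace
    haveI : CompactSpace (GammaSG φ) := isCompact_iff_compactSpace.1 (gamma_compact φ hφ)
    have hcont : ∀ i : C(Ω, ℝ) × Ω,
        Continuous fun R : GammaSG φ => spair i.1 (R.1 (diracSM i.2)) := fun i =>
      (spair_cont i.1).comp ((continuous_apply _).comp continuous_subtype_val)
    refine metrizable_aux (S := EllisE φ) (ι := C(Ω, ℝ) × Ω)
      (fun i p => i.1 (p.1 i.2)) (map_emb.comp IsEmbedding.subtypeVal)
      (fun i => ⟨fun R : GammaSG φ => spair i.1 (R.1 (diracSM i.2)), hcont i⟩) ?_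
    intro i j p
    set d : C(GammaSG φ, ℝ) := (⟨fun R : GammaSG φ => spair i.1 (R.1 (diracSM i.2)), hcont i⟩ : C(GammaSG φ, ℝ))
      - ⟨fun R : GammaSG φ => spair j.1 (R.1 (diracSM j.2)), hcont j⟩ with hd
    let A : Set (Ω → Ω) := {q | |i.1 (q i.2) - j.1 (q j.2)| ≤ ‖d‖}
    have hA : IsClosed A := isClosed_le ((i.1.continuous.comp (continuous_apply i.2)).sub
      (j.1.continuous.comp (continuous_apply j.2))).abs continuous_const
    refine closure_minimal (t := A) ?_ hA p.2
    rintro _ ⟨n, rfl⟩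
    have h := ContinuousMap.norm_coe_le_norm d ⟨(Vop φ)^[n], subset_closure ⟨n, rfl⟩⟩
    have hv : ∀ (x : C(Ω, ℝ)) (ω : Ω), spair x ((Vop φ)^[n] (diracSM ω)) = x (φ^[n] ω) := by
      intro x ω
      rw [Vop_iterate φ hφ, spair_Vop _ (hφ.iterate n).measurable]
      exact spair_dirac (x.comp ⟨φ^[n], hφ.iterate n⟩) ω
    change |spair i.1 ((Vop φ)^[n] (diracSM i.2)) - spair j.1 ((Vop φ)^[n] (diracSM j.2))| ≤ ‖d‖ at h
    rw [hv, hv] at h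
    exact h
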